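/- arXiv:2509.18296 — 2 statements merged into one kernel-verified Lean document; each statement's English description precedes it below -/
import Mathlib

section
/- Let G ⊆ ℂⁿ be a bounded complete n-circled domain and let f : ℂⁿ → ℂ be continuous on closure(G) and holomorphic on G. Then for every ε > 0 there exists a polynomial p ∈ MvPolynomial (Fin n) ℂ such that sup_{z ∈ closure(G)} |f(z) − p(z)| ≤ ε, where p(z) denotes the evaluation of p at z. -/
open Metric Set Filter Topology MeasureTheory in
lemma dirDeriv_differentiableAt {n : ℕ} {U : Set (Fin n → ℂ)} (hU : IsOpen U)
    {f : (Fin n → ℂ) → ℂ} (hf : DifferentiableOn ℂ f U) (v : Fin n → ℂ)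
    {z₀ : Fin n → ℂ} (hz₀ : z₀ ∈ U) :
    DifferentiableAt ℂ (fun z => fderiv ℂ f z v) z₀ := by
  have hfa : ∀ z ∈ U, DifferentiableAt ℂ f z := fun z hz => (hf z hz).differentiableAt (hU.mem_nhds hz)
  obtain ⟨R, hR, hRU, hRM⟩ : ∃ R > 0, ball z₀ R ⊆ U ∧ ∀ z ∈ ball z₀ R, dist (f z) (f z₀) < 1 := by
    have h1 : ∀ᶠ z in 𝓝 z₀, z ∈ U ∧ dist (f z) (f z₀) < 1 :=
      Filter.Eventually.and (hU.mem_nhds hz₀)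
        ((hfa z₀ hz₀).continuousAt.eventually (ball_mem_nhds _ one_pos))
    obtain ⟨R, hR, h⟩ := Metric.mem_nhds_iff.1 h1
    exact ⟨R, hR, fun z hz => (h hz).1, fun z hz => (h hz).2⟩
  set δ : ℝ := R / (4 * (‖v‖ + 1)) with hδ
  have hvp : 0 < ‖v‖ + 1 := by positivity
  have hδ0 : 0 < δ := by positivity
  have hδv : δ * ‖v‖ ≤ R / 4 := by
    have : δ * (‖v‖ + 1) = R / 4 := by rw [hδ]; field_simp
    nlinarith
  have hmem : ∀ z ∈ ball z₀ (R / 4), ∀ l : ℂ, ‖l‖ ≤ δ → z + l • v ∈ ball z₀ (R / 2) := by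
    intro z hz l hl
    rw [mem_ball, dist_eq_norm] at hz ⊢
    have : ‖l • v‖ ≤ R / 4 := by
      rw [norm_smul]
      exact (mul_le_mul_of_nonneg_right hl (norm_nonneg _)).trans hδv
    calc ‖z + l • v - z₀‖ = ‖(z - z₀) + l • v‖ := by congr 1; abel
      _ ≤ ‖z - z₀‖ + ‖l • v‖ := norm_add_le _ _
      _ < R / 2 := by linarith
  have hsub : ball z₀ (R / 2) ⊆ U := (ball_subset_ball (by linarith)).trans hRU
  have hbound : ∀ w ∈ ball z₀ (R / 2), ‖fderiv ℂ f w‖ ≤ 2 / (R / 2) := by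
    intro w hw
    have hs : ball w (R / 2) ⊆ ball z₀ R := by
      apply ball_subset_ball'
      have := mem_ball.1 hw
      linarith
    apply Complex.norm_fderiv_le_div_of_mapsTo_ball (hf.mono (hs.trans hRU)) _ (by positivity)
    intro x hx
    have h1 := hRM x (hs hx)
    have h2 := hRM w (ball_subset_ball (by linarith) hw)
    rw [mem_closedBall]
    have := dist_triangle_right (f x) (f w) (f z₀)
    linarith
  -- Cauchy formula
  let c : ℝ → ℂ := fun θ => deriv (circleMap 0 δ) θ * (1 / (circleMap 0 δ θ) ^ 2)
  have hne : ∀ θ, circleMap 0 δ θ ≠ 0 := fun θ => circleMap_ne_center hδ0.ne'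
  have hc : Continuous c := by
    have : Continuous fun θ => circleMap 0 δ θ := continuous_circleMap 0 δ
    simp only [c, deriv_circleMap]
    refine (this.mul continuous_const).mul (continuous_const.div (this.pow 2) ?_)
    intro θ; exact pow_ne_zero _ (hne θ)
  have hnorm : ∀ θ, ‖circleMap 0 δ θ‖ ≤ δ := fun θ => by simp [abs_of_pos hδ0]
  have hcauchy : ∀ z ∈ ball z₀ (R / 4), (2 * Real.pi * Complex.I) * fderiv ℂ f z v =
      ∫ θ in (0:ℝ)..2 * Real.pi, c θ * f (z + circleMap 0 δ θ • v) := by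
    intro z hz
    have hd : DifferentiableOn ℂ (fun l : ℂ => f (z + l • v)) (closedBall 0 δ) := by
      intro l hl
      have hl' : ‖l‖ ≤ δ := by simpa using hl
      have := hfa _ (hsub (hmem z hz l hl'))
      apply DifferentiableAt.differentiableWithinAt
      exact DifferentiableAt.fun_comp' (f := fun l : ℂ => z + l • v) l this (by fun_prop)
    have h := hd.deriv_eq_smul_circleIntegral hδ0
    have h2 : deriv (fun l : ℂ => f (z + l • v)) 0 = fderiv ℂ f z v := by
      have hz' : DifferentiableAt ℂ f (z + (0:ℂ) • v) := hfa _ (hsub (hmem z hz 0 (by simpa using hδ0.le)))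
      have h3 : HasDerivAt (fun l : ℂ => z + l • v) v 0 := by
        simpa using ((hasDerivAt_id (0:ℂ)).smul_const v).const_add z
      have := hz'.hasFDerivAt.comp_hasDerivAt (0:ℂ) h3
      have h4 := this.deriv
      simp only [zero_smul, add_zero] at h4
      exact h4
    rw [h2] at h
    simp only [smul_eq_mul] at h
    rw [← h, circleIntegral]
    simp [c, mul_assoc]
  have hmain : HasFDerivAt (fun z => ∫ θ in (0:ℝ)..2 * Real.pi, c θ * f (z + circleMap 0 δ θ • v))
      (∫ θ in (0:ℝ)..2 * Real.pi, c θ • fderiv ℂ f (z₀ + circleMap 0 δ θ • v)) z₀ := by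
    have hcont : ∀ z ∈ ball z₀ (R / 4), Continuous fun θ => c θ * f (z + circleMap 0 δ θ • v) := by
      intro z hz
      refine hc.mul (hf.continuousOn.comp_continuous ?_ fun θ => hsub (hmem z hz _ (hnorm θ)))
      have : Continuous fun θ => circleMap 0 δ θ := continuous_circleMap 0 δ
      fun_prop
    have hnb : ball z₀ (R / 4) ∈ 𝓝 z₀ := ball_mem_nhds _ (by positivity)
    refine intervalIntegral.hasFDerivAt_integral_of_dominated_of_fderiv_le
      (F' := fun z θ => c θ • fderiv ℂ f (z + circleMap 0 δ θ • v))
      (bound := fun θ => ‖c θ‖ * (2 / (R / 2))) hnb ?_ ?_ ?_ ?_ ?_ ?_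
    · filter_upwards [hnb] with z hz
      exact (hcont z hz).aestronglyMeasurable
    · exact (hcont z₀ (mem_ball_self (by positivity))).intervalIntegrable _ _
    · have hm : Measurable fun θ => fderiv ℂ f (z₀ + circleMap 0 δ θ • v) := by
        refine (measurable_fderiv ℂ f).comp ?_
        have : Continuous fun θ => circleMap 0 δ θ := continuous_circleMap 0 δ
        exact Continuous.measurable (by fun_prop)
      have : ProperSpace ((Fin n → ℂ) →L[ℂ] ℂ) := FiniteDimensional.proper ℂ _
      exact (hc.aestronglyMeasurable).smul hm.aestronglyMeasurable
    · refine ae_of_all _ fun θ _ z hz => ?_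
      rw [norm_smul]
      exact mul_le_mul_of_nonneg_left (hbound _ (hmem z hz _ (hnorm θ))) (norm_nonneg _)
    · exact (hc.norm.mul continuous_const).intervalIntegrable _ _
    · refine ae_of_all _ fun θ _ z hz => ?_
      have h1 := (hfa _ (hsub (hmem z hz _ (hnorm θ)))).hasFDerivAt
      have h2 : HasFDerivAt (fun z => f (z + circleMap 0 δ θ • v))
          (fderiv ℂ f (z + circleMap 0 δ θ • v)) z := by
        simpa using (hasFDerivAt_comp_add_right (𝕜 := ℂ) (f := f) (x := z) (circleMap 0 δ θ • v)).2 h1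
      exact h2.const_mul (c θ)
  have hpi : (2 * Real.pi * Complex.I : ℂ) ≠ 0 := Complex.two_pi_I_ne_zero
  have hfin := (hmain.differentiableAt).const_mul (2 * Real.pi * Complex.I : ℂ)⁻¹
  refine hfin.congr_of_eventuallyEq ?_
  filter_upwards [ball_mem_nhds z₀ (show (0:ℝ) < R / 4 by positivity)] with z hz
  rw [← hcauchy z hz, inv_mul_cancel_left₀ hpi]

lemma contDiffOn_of_holo {n : ℕ} {U : Set (Fin n → ℂ)} (hU : IsOpen U) (k : ℕ) :
    ∀ f : (Fin n → ℂ) → ℂ, DifferentiableOn ℂ f U → ContDiffOn ℂ k f U := by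
  induction k with
  | zero => intro f hf; simpa using hf.continuousOn
  | succ k ih =>
    intro f hf
    push_cast
    rw [contDiffOn_succ_iff_fderiv_apply hU.uniqueDiffOn]
    refine ⟨hf, fun h => absurd h (by simp), fun v => ?_⟩
    refine (ih (fun z => fderiv ℂ f z v) fun z hz =>
      (dirDeriv_differentiableAt hU hf v hz).differentiableWithinAt).congr fun z hz => ?_
    rw [fderivWithin_of_isOpen hU hz]

lemma exists_poly_of_multilinear {n k : ℕ}
    (g : ContinuousMultilinearMap ℂ (fun _ : Fin k => (Fin n → ℂ)) ℂ) :
    ∃ p : MvPolynomial (Fin n) ℂ, ∀ z, MvPolynomial.eval z p = g fun _ => z := by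
  classical
  refine ⟨∑ r : Fin k → Fin n, MvPolynomial.C (g fun i => Pi.single (r i) 1) *
    ∏ i, MvPolynomial.X (r i), fun z => ?_⟩
  have hz : z = ∑ j, z j • (Pi.single j 1 : Fin n → ℂ) := by
    ext i; simp [Finset.sum_apply, Pi.single_apply]
  have : (g fun _ => z) = g fun _ => ∑ j, z j • (Pi.single j 1 : Fin n → ℂ) := by rw [← hz]
  rw [this, ContinuousMultilinearMap.map_sum]
  simp only [map_sum, map_mul, MvPolynomial.eval_C, map_prod, MvPolynomial.eval_X]
  refine Finset.sum_congr rfl fun r _ => ?_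
  rw [ContinuousMultilinearMap.map_smul_univ, smul_eq_mul, mul_comm]

open Metric Set Filter Topology in
/-- Polynomials are dense in `B(G)`. -/
theorem stmt_9 (n : ℕ) (G : Set (Fin n → ℂ))
    (hop : IsOpen G) (hconn : IsConnected G) (hbd : Bornology.IsBounded G)
    (hne : G.Nonempty)
    (hcirc : ∀ z ∈ G, ∀ w : Fin n → ℂ, (∀ j, ‖w j‖ ≤ ‖z j‖) → w ∈ G)
    (f : (Fin n → ℂ) → ℂ)
    (hfc : ContinuousOn f (closure G)) (hfd : DifferentiableOn ℂ f G) :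
    ∀ ε > (0 : ℝ), ∃ p : MvPolynomial (Fin n) ℂ,
      ∀ z ∈ closure G, ‖f z - MvPolynomial.eval z p‖ ≤ ε := by
  intro ε hε
  have hK : IsCompact (closure G) := hbd.isCompact_closure
  have h0 : (0 : Fin n → ℂ) ∈ G := by
    obtain ⟨z, hz⟩ := hne
    exact hcirc z hz 0 fun j => by simp
  -- scaling
  have hscale : ∀ z ∈ closure G, ∀ l : ℂ, ‖l‖ < 1 → l • z ∈ G := by
    intro z hz l hl
    have hev : ∀ᶠ w in 𝓝 z, ∀ j, ‖l * z j‖ ≤ ‖w j‖ := by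
      rw [eventually_all]
      intro j
      by_cases hj : z j = 0
      · simp [hj]
      · have hlt : ‖l * z j‖ < ‖z j‖ := by
          rw [norm_mul]
          have : 0 < ‖z j‖ := norm_pos_iff.2 hj
          nlinarith
        have hcont : ContinuousAt (fun w : Fin n → ℂ => ‖w j‖) z :=
          (continuous_apply j).norm.continuousAt
        exact (hcont.eventually (lt_mem_nhds hlt)).mono fun w hw => hw.le
    obtain ⟨w, hw, hwG⟩ := ((mem_closure_iff_frequently.1 hz).and_eventually hev).exists
    exact hcirc w hw _ fun j => by simpa using hwG j
  obtain ⟨M, hM⟩ := hK.exists_bound_of_continuousOn hfc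
  have hM0 : 0 ≤ M := (norm_nonneg _).trans (hM 0 (subset_closure h0))
  obtain ⟨B, hB⟩ := hK.isBounded.exists_norm_le
  have huc := hK.uniformContinuousOn_of_continuous hfc
  rw [Metric.uniformContinuousOn_iff] at huc
  obtain ⟨δ, hδ, huc⟩ := huc (ε / 2) (by positivity)
  -- choose the radius
  obtain ⟨R, hR0, hR1, hRB⟩ : ∃ R : ℝ, 0 < R ∧ R < 1 ∧ (1 - R ^ 2) * B < δ := by
    have hc : ContinuousAt (fun R : ℝ => (1 - R ^ 2) * B) 1 := by fun_prop
    have h1 : ∀ᶠ R in 𝓝[<] (1:ℝ), (1 - R ^ 2) * B < δ :=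
      (hc.eventually (gt_mem_nhds (by simpa using hδ))).filter_mono nhdsWithin_le_nhds
    have h2 : ∀ᶠ R in 𝓝[<] (1:ℝ), 0 < R :=
      (lt_mem_nhds one_pos).filter_mono nhdsWithin_le_nhds
    obtain ⟨R, ⟨h1, h2⟩, h3⟩ := ((h1.and h2).and self_mem_nhdsWithin).exists
    exact ⟨R, h2, h3, h1⟩
  have hR2 : R ^ 2 < 1 := by nlinarith
  -- choose the degree
  obtain ⟨N, hN⟩ : ∃ N : ℕ, M * R ^ N / (1 - R) ≤ ε / 2 := by
    have : Tendsto (fun N : ℕ => M * R ^ N / (1 - R)) atTop (𝓝 (M * 0 / (1 - R))) :=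
      ((tendsto_pow_atTop_nhds_zero_of_lt_one hR0.le hR1).const_mul M).div_const _
    rw [mul_zero, zero_div] at this
    exact ((this.eventually (gt_mem_nhds (half_pos hε))).mono fun N h => h.le).exists
  choose P hP using fun k : ℕ => exists_poly_of_multilinear (iteratedFDeriv ℂ k f 0)
  refine ⟨∑ k ∈ Finset.range N, MvPolynomial.C ((k.factorial : ℂ)⁻¹ * ((R : ℂ) ^ 2) ^ k) * P k,
    fun z hz => ?_⟩
  let φ : ℂ → ℂ := fun l => f (l • z)
  have hnR : ‖((R : ℂ) ^ 2)‖ = R ^ 2 := by simp [abs_of_pos hR0]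
  have hφ : DifferentiableOn ℂ φ (ball 0 1) := by
    intro l hl
    have hl' : ‖l‖ < 1 := by simpa using hl
    have hm := hscale z hz l hl'
    have := (hfd _ hm).differentiableAt (hop.mem_nhds hm)
    apply DifferentiableAt.differentiableWithinAt
    exact DifferentiableAt.fun_comp' (f := fun l : ℂ => l • z) l this (by fun_prop)
  have hder : ∀ k, iteratedDeriv k φ 0 = MvPolynomial.eval z (P k) := by
    intro k
    rw [hP]
    let g : ℂ →L[ℂ] (Fin n → ℂ) := (ContinuousLinearMap.id ℂ ℂ).smulRight z
    have hg0 : g 0 = 0 := map_zero g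
    have hgo : IsOpen (g ⁻¹' G) := hop.preimage g.continuous
    have hm : (0 : ℂ) ∈ g ⁻¹' G := by simpa [hg0] using h0
    have h := g.iteratedFDerivWithin_comp_right (contDiffOn_of_holo hop k f hfd) hop.uniqueDiffOn
      hgo.uniqueDiffOn hm le_rfl
    rw [iteratedFDerivWithin_of_isOpen k hgo hm, hg0, iteratedFDerivWithin_of_isOpen k hop h0] at h
    have hφg : φ = f ∘ g := by ext l; simp [φ, g]
    rw [iteratedDeriv_eq_iteratedFDeriv, hφg, h]
    simp [g]
  have hsum := Complex.hasSum_taylorSeries_on_ball hφ (z := (R : ℂ) ^ 2)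
    (by rw [mem_ball_zero_iff, hnR]; exact hR2)
  have hterm : ∀ k : ℕ, ‖((k.factorial : ℂ)⁻¹ • ((R : ℂ) ^ 2 - 0) ^ k • iteratedDeriv k φ 0)‖
      ≤ M * R ^ k := by
    intro k
    have hcl : closedBall (0:ℂ) R ⊆ ball 0 1 := closedBall_subset_ball hR1
    have h := Complex.norm_iteratedDeriv_le_of_forall_mem_sphere_norm_le (f := φ) (c := 0) (C := M)
      k hR0 (hφ.diffContOnCl_ball hcl) (fun l hl => ?_)
    · rw [sub_zero, norm_smul, norm_smul, norm_inv, norm_pow, hnR, Complex.norm_natCast]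
      have hk : (0:ℝ) < k.factorial := by exact_mod_cast k.factorial_pos
      calc (k.factorial : ℝ)⁻¹ * ((R ^ 2) ^ k * ‖iteratedDeriv k φ 0‖)
          ≤ (k.factorial : ℝ)⁻¹ * ((R ^ 2) ^ k * (k.factorial * M / R ^ k)) := by gcongr
        _ = M * R ^ k := by field_simp; ring
    · have : ‖l‖ < 1 := by
        have : ‖l‖ = R := by simpa using hl
        linarith
      exact hM _ (subset_closure (hscale z hz l this))
  have htail := norm_sub_le_of_geometric_bound_of_hasSum hR1 hterm hsum N
  have heval : MvPolynomial.eval z (∑ k ∈ Finset.range N,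
      MvPolynomial.C ((k.factorial : ℂ)⁻¹ * ((R : ℂ) ^ 2) ^ k) * P k) =
      ∑ k ∈ Finset.range N, ((k.factorial : ℂ)⁻¹ • ((R : ℂ) ^ 2 - 0) ^ k • iteratedDeriv k φ 0) := by
    simp [hder, mul_assoc]
  rw [heval]
  have hclose : dist (f z) (φ ((R : ℂ) ^ 2)) < ε / 2 := by
    refine huc z hz _ (subset_closure (hscale z hz _ (by rw [hnR]; exact hR2))) ?_
    rw [dist_eq_norm]
    have : z - ((R : ℂ) ^ 2) • z = ((1 - R ^ 2 : ℝ) : ℂ) • z := by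
      push_cast; rw [sub_smul, one_smul]
    rw [this, norm_smul, Complex.norm_real, Real.norm_of_nonneg (by linarith)]
    exact (mul_le_mul_of_nonneg_left (hB z hz) (by linarith)).trans_lt hRB
  rw [← dist_eq_norm] at htail ⊢
  have := dist_triangle_right (f z) (∑ k ∈ Finset.range N,
    ((k.factorial : ℂ)⁻¹ • ((R : ℂ) ^ 2 - 0) ^ k • iteratedDeriv k φ 0)) (φ ((R : ℂ) ^ 2))
  linarith
end

section
/- Let G₁, G₂ ⊆ ℂⁿ be bounded complete n-circled domains, and suppose that for every k ∈ M there is ρ(k) ∈ (ℝ_{>0})ⁿ such that P(ρ(k)) ⊆ G₁ and |z^k| ≤ ρ(k)^k for every z ∈ G₁. Let A : ((Fin n → ℂ) → ℂ) →ₗ[ℂ] ((Fin n → ℂ) → ℂ) be a ℂ-linear map such that: (i) for every f holomorphic on G₁, A f is holomorphic on G₂; and (ii) for every t ∈ (0,1) there exist r ∈ (0,1) and C₀ > 0 such that ‖A f‖_{t•closure(G₂)} ≤ C₀ ‖f‖_{r•closure(G₁)} for every f holomorphic on G₁. Then for every t ∈ (0,1) there exist C > 0 and s ∈ (0,1) such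 that for every k ∈ M, every f : ℂⁿ → ℂ holomorphic on G₁, and every c : ℕⁿ → ℂ such that for all z ∈ G₁ the family (c_m · z^m)_{m ∈ ℕⁿ} is absolutely summable with sum f(z): ‖A(P_k^c f)‖_{t•closure(G₂)} ≤ C · sup_{z ∈ s•closure(P(ρ(k)))} |f(z)|, where P_k^c f : ℂⁿ → ℂ is the function z ↦ Σ'_{l ≥ 1} c_{l·k} · z^{l·k} (tsum, equal to 0 at points where the family is not summable). -/
open scoped Pointwise

noncomputable section Fourier
open MeasureTheory UnitAddTorus

local instance instMeasUAC : MeasureSpace UnitAddCircle := ⟨AddCircle.haarAddCircle⟩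

local instance instHaarUAC : Measure.IsAddHaarMeasure (volume : Measure UnitAddCircle) :=
  inferInstanceAs (Measure.IsAddHaarMeasure AddCircle.haarAddCircle)

local instance instProbUAC : IsProbabilityMeasure (volume : Measure UnitAddCircle) :=
  inferInstanceAs (IsProbabilityMeasure AddCircle.haarAddCircle)

lemma coeff_bound {n : ℕ} (a : (Fin n → ℕ) → ℂ) (B : ℝ) (hB : 0 ≤ B)
    (ha : Summable fun m => ‖a m‖)
    (h : ∀ u : Fin n → ℂ, (∀ j, ‖u j‖ = 1) → ‖∑' m, a m * ∏ j, u j ^ m j‖ ≤ B)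
    (m : Fin n → ℕ) : ‖a m‖ ≤ B := by
  let e : (Fin n → ℕ) → C(UnitAddTorus (Fin n), ℂ) := fun m => mFourier (fun j => (m j : ℤ))
  have hs : Summable fun m => a m • e m := by
    refine Summable.of_norm ?_
    refine ha.congr fun m => ?_
    rw [norm_smul, mFourier_norm, mul_one]
  set F := ∑' m, a m • e m with hF
  have hFB : ‖F‖ ≤ B := by
    refine (ContinuousMap.norm_le _ hB).mpr fun x => ?_
    have h1 := (ContinuousMap.evalCLM ℂ x).hasSum hs.hasSum
    have h2 := h (fun j => (AddCircle.toCircle (x j) : ℂ)) (fun j => Circle.norm_coe _)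
    have h3 : F x = ∑' m, a m * ∏ j, ((AddCircle.toCircle (x j) : ℂ)) ^ m j := by
      refine Eq.trans ?_ (Eq.trans h1.tsum_eq.symm (tsum_congr fun m => ?_))
      · rfl
      · simp [e, mFourier, fourier_apply, AddCircle.toCircle_nsmul]
    rw [h3]; exact h2
  let T : C(UnitAddTorus (Fin n), ℂ) →L[ℂ] Lp ℂ 2 (volume : Measure (UnitAddTorus (Fin n))) :=
    ContinuousMap.toLp 2 volume ℂ
  have hT : ‖T F‖ ≤ ‖F‖ := by
    refine (T.le_opNorm F).trans ?_
    have : ‖T‖ ≤ 1 := by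
      have := ContinuousMap.toLp_norm_le (α := UnitAddTorus (Fin n)) (E := ℂ) (p := 2)
        (μ := volume) (𝕜 := ℂ)
      simpa [measureUnivNNReal] using this
    nlinarith [norm_nonneg F]
  have hS := (innerSL ℂ (T (e m))).hasSum (T.hasSum hs.hasSum)
  have hort := (orthonormal_iff_ite.mp (orthonormal_mFourier (d := Fin n)))
  have hval : innerSL ℂ (T (e m)) (T F) = a m := by
    rw [hF, ← hS.tsum_eq, tsum_eq_single m]
    · have := hort (fun j => (m j : ℤ)) (fun j => (m j : ℤ))
      simp only [map_smul, innerSL_apply_apply, smul_eq_mul]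
      rw [if_pos rfl] at this
      change a m * inner ℂ (mFourierLp 2 _) (mFourierLp 2 _) = _
      rw [this, mul_one]
    · intro m' hm'
      have := hort (fun j => (m j : ℤ)) (fun j => (m' j : ℤ))
      simp only [map_smul, innerSL_apply_apply, smul_eq_mul]
      rw [if_neg (fun hh => hm' (funext fun j => by simpa using (congrFun hh j).symm))] at this
      change a m' * inner ℂ (mFourierLp 2 _) (mFourierLp 2 _) = _
      rw [this, mul_zero]
  have hn : ‖T (e m)‖ = 1 := orthonormal_mFourier.1 _
  calc ‖a m‖ = ‖inner ℂ (T (e m)) (T F)‖ := by rw [← hval]; rfl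
    _ ≤ ‖T (e m)‖ * ‖T F‖ := norm_inner_le_norm _ _
    _ ≤ B := by rw [hn, one_mul]; exact hT.trans hFB

end Fourier

lemma exists_bigger {n : ℕ} (G : Set (Fin n → ℂ)) (hop : IsOpen G)
    (hcirc : ∀ z ∈ G, ∀ w : Fin n → ℂ, (∀ j, ‖w j‖ ≤ ‖z j‖) → w ∈ G)
    (k : Fin n → ℕ) (hk : k ≠ 0) (w : Fin n → ℂ) (hw : w ∈ G) :
    ∃ w' ∈ G, ‖∏ j, w j ^ k j‖ < ‖∏ j, w' j ^ k j‖ := by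
  obtain ⟨j0, hj0⟩ : ∃ j, k j ≠ 0 := by
    by_contra! h
    exact hk (funext h)
  have hcont : Continuous (fun ε : ℝ => (fun j => ((‖w j‖ + ε : ℝ) : ℂ) : Fin n → ℂ)) := by
    fun_prop
  have h0 : (fun j => ((‖w j‖ + 0 : ℝ) : ℂ) : Fin n → ℂ) ∈ G :=
    hcirc w hw _ fun j => by simp
  have hev : ∀ᶠ ε in nhds (0 : ℝ), (fun j => ((‖w j‖ + ε : ℝ) : ℂ) : Fin n → ℂ) ∈ G :=
    hcont.continuousAt.eventually (hop.mem_nhds h0)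
  obtain ⟨ε, hε, hε0⟩ := ((hev.filter_mono nhdsWithin_le_nhds).and
    (self_mem_nhdsWithin : Set.Ioi (0 : ℝ) ∈ nhdsWithin 0 (Set.Ioi 0))).exists
  have hε0 : 0 < ε := hε0
  refine ⟨_, hε, ?_⟩
  have hn : ∀ j, ‖((‖w j‖ + ε : ℝ) : ℂ)‖ = ‖w j‖ + ε := fun j => by
    rw [Complex.norm_real, Real.norm_eq_abs, abs_of_pos (by positivity)]
  simp only [norm_prod, norm_pow, hn]
  by_cases hz : ∃ j, ‖w j‖ ^ k j = 0
  · obtain ⟨j, hj⟩ := hz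
    rw [Finset.prod_eq_zero (Finset.mem_univ j) hj]
    exact Finset.prod_pos fun j _ => by positivity
  · push Not at hz
    refine Finset.prod_lt_prod (fun j _ => lt_of_le_of_ne (by positivity) (hz j).symm)
      (fun j _ => ?_) ⟨j0, Finset.mem_univ _, ?_⟩
    · gcongr; linarith
    · exact pow_lt_pow_left₀ (by linarith) (norm_nonneg _) hj0

lemma cauchy_bound {n : ℕ} (s : ℝ) (hs0 : 0 < s) (hs1 : s < 1) (ρ : Fin n → ℝ)
    (hρ : ∀ j, 0 < ρ j) (f : (Fin n → ℂ) → ℂ) (c : (Fin n → ℕ) → ℂ)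
    (hc : ∀ z ∈ {z : Fin n → ℂ | ∀ j, ‖z j‖ < ρ j},
          Summable (fun m : Fin n → ℕ => ‖c m * ∏ j, z j ^ m j‖) ∧
          HasSum (fun m : Fin n → ℕ => c m * ∏ j, z j ^ m j) (f z)) (m : Fin n → ℕ) :
    ‖c m‖ * ∏ j, (s * ρ j) ^ m j ≤
      ⨆ z ∈ s • closure {z : Fin n → ℂ | ∀ j, ‖z j‖ < ρ j}, ‖f z‖ := by
  have hPpi : {z : Fin n → ℂ | ∀ j, ‖z j‖ < ρ j} =
      Set.pi Set.univ fun j => Metric.ball (0 : ℂ) (ρ j) := by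
    ext z; simp
  have hcl : closure {z : Fin n → ℂ | ∀ j, ‖z j‖ < ρ j} = {z : Fin n → ℂ | ∀ j, ‖z j‖ ≤ ρ j} := by
    rw [hPpi, closure_pi_set]
    ext z
    simp [closure_ball _ (hρ _).ne']
  rw [hcl]
  have hsρ : ∀ j, s * ρ j < ρ j := fun j => by nlinarith [hρ j]
  have hsρ0 : ∀ j, 0 < s * ρ j := fun j => mul_pos hs0 (hρ j)
  have hnp : ∀ j, ‖((s * ρ j : ℝ) : ℂ)‖ = s * ρ j := fun j => by
    rw [Complex.norm_real, Real.norm_eq_abs, abs_of_pos (hsρ0 j)]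
  set p : Fin n → ℂ := fun j => ((s * ρ j : ℝ) : ℂ) with hp
  have hpP : p ∈ {z : Fin n → ℂ | ∀ j, ‖z j‖ < ρ j} := fun j => by
    rw [hp]; simp only [hnp]; exact hsρ j
  have hsum := (hc p hpP).1
  have hbd : BddAbove (Set.range fun z : Fin n → ℂ =>
      ⨆ (_ : z ∈ s • {z : Fin n → ℂ | ∀ j, ‖z j‖ ≤ ρ j}), ‖f z‖) := by
    refine ⟨∑' m, ‖c m * ∏ j, p j ^ m j‖, ?_⟩
    rintro _ ⟨z, rfl⟩
    have hnn : 0 ≤ ∑' m, ‖c m * ∏ j, p j ^ m j‖ := tsum_nonneg fun _ => norm_nonneg _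
    refine Real.iSup_le (fun hz => ?_) hnn
    obtain ⟨w, hw, rfl⟩ := hz
    have hzj : ∀ j, ‖(s • w) j‖ ≤ s * ρ j := fun j => by
      rw [Pi.smul_apply, norm_smul, Real.norm_eq_abs, abs_of_pos hs0]
      exact mul_le_mul_of_nonneg_left (hw j) hs0.le
    have hz := hc (s • w) (fun j => (hzj j).trans_lt (hsρ j))
    change ‖f (s • w)‖ ≤ _
    rw [← hz.2.tsum_eq]
    refine tsum_of_norm_bounded hsum.hasSum fun m => ?_
    simp only [norm_mul, norm_prod, norm_pow]
    refine mul_le_mul_of_nonneg_left (Finset.prod_le_prod (fun j _ => by positivity) fun j _ => ?_)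
      (norm_nonneg _)
    refine pow_le_pow_left₀ (norm_nonneg _) ?_ _
    rw [hp]; simp only [hnp]; exact hzj j
  have hB0 : 0 ≤ ⨆ z ∈ s • {z : Fin n → ℂ | ∀ j, ‖z j‖ ≤ ρ j}, ‖f z‖ :=
    Real.iSup_nonneg fun z => Real.iSup_nonneg fun _ => norm_nonneg _
  have key := coeff_bound (fun m => c m * ∏ j, p j ^ m j) _ hB0 hsum ?_ m
  · refine le_trans (le_of_eq ?_) key
    rw [norm_mul, norm_prod]
    congr 1
    refine Finset.prod_congr rfl fun j _ => ?_
    rw [norm_pow, hp]; simp only [hnp]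
  · intro u hu
    have hz : (fun j => u j * p j) ∈ {z : Fin n → ℂ | ∀ j, ‖z j‖ < ρ j} := fun j => by
      rw [norm_mul, hu, one_mul]; exact hpP j
    have h1 : ∑' m : Fin n → ℕ, (c m * ∏ j, p j ^ m j) * ∏ j, u j ^ m j = f fun j => u j * p j := by
      rw [← (hc _ hz).2.tsum_eq]
      refine tsum_congr fun m => ?_
      rw [mul_assoc, ← Finset.prod_mul_distrib]
      congr 1
      exact Finset.prod_congr rfl fun j _ => by rw [mul_pow, mul_comm]
    rw [h1]
    have hmem : (fun j => u j * p j) ∈ s • {z : Fin n → ℂ | ∀ j, ‖z j‖ ≤ ρ j} := by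
      refine ⟨fun j => u j * (ρ j : ℂ), fun j => ?_, ?_⟩
      · rw [norm_mul, hu, one_mul, Complex.norm_real, Real.norm_eq_abs, abs_of_pos (hρ j)]
      · funext j
        simp [hp]; ring
    have h2 := le_ciSup hbd (fun j => u j * p j)
    rwa [ciSup_pos hmem] at h2

/-- Theorem 4.8: uniform estimates for `A ∘ P_k`. If `A` is a bounded
operator from `H(G₁)` to `H(G₂)` (bounded complete `n`-circled domains), then for every
`t ∈ (0,1)` there are `C > 0` and `s ∈ (0,1)` such that for all `k ∈ M` and all `f`
holomorphic on `G₁` with monomial expansion `c`,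
`‖A(P_k f)‖_{t•cl G₂} ≤ C · ‖f‖_{s•cl P(ρ(k))}`, where
`P_k f(z) = Σ'_{l≥1} c_{l·k} z^{l·k}`. -/
theorem stmt_15 (n : ℕ) (G1 G2 : Set (Fin n → ℂ))
    (hop1 : IsOpen G1) (hconn1 : IsConnected G1) (hbd1 : Bornology.IsBounded G1)
    (hne1 : G1.Nonempty)
    (hcirc1 : ∀ z ∈ G1, ∀ w : Fin n → ℂ, (∀ j, ‖w j‖ ≤ ‖z j‖) → w ∈ G1)
    (hop2 : IsOpen G2) (hconn2 : IsConnected G2) (hbd2 : Bornology.IsBounded G2)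
    (hne2 : G2.Nonempty)
    (hcirc2 : ∀ z ∈ G2, ∀ w : Fin n → ℂ, (∀ j, ‖w j‖ ≤ ‖z j‖) → w ∈ G2)
    (ρ : (Fin n → ℕ) → Fin n → ℝ)
    (hρ : ∀ k : Fin n → ℕ, k ≠ 0 → Finset.univ.gcd k = 1 →
      (∀ j, 0 < ρ k j) ∧ {z : Fin n → ℂ | ∀ j, ‖z j‖ < ρ k j} ⊆ G1 ∧
        ∀ z ∈ G1, ‖∏ j, z j ^ k j‖ ≤ ∏ j, ρ k j ^ k j)
    (A : ((Fin n → ℂ) → ℂ) →ₗ[ℂ] ((Fin n → ℂ) → ℂ))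
    (hA1 : ∀ f : (Fin n → ℂ) → ℂ,
      DifferentiableOn ℂ f G1 → DifferentiableOn ℂ (A f) G2)
    (hA2 : ∀ t ∈ Set.Ioo (0 : ℝ) 1, ∃ r ∈ Set.Ioo (0 : ℝ) 1, ∃ C0 > (0 : ℝ),
      ∀ f : (Fin n → ℂ) → ℂ, DifferentiableOn ℂ f G1 →
        (⨆ z ∈ t • closure G2, ‖A f z‖) ≤ C0 * ⨆ z ∈ r • closure G1, ‖f z‖) :
    ∀ t ∈ Set.Ioo (0 : ℝ) 1, ∃ C > (0 : ℝ), ∃ s ∈ Set.Ioo (0 : ℝ) 1,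
      ∀ k : Fin n → ℕ, k ≠ 0 → Finset.univ.gcd k = 1 →
      ∀ f : (Fin n → ℂ) → ℂ, DifferentiableOn ℂ f G1 →
      ∀ c : (Fin n → ℕ) → ℂ,
        (∀ z ∈ G1,
          Summable (fun m : Fin n → ℕ => ‖c m * ∏ j, z j ^ m j‖) ∧
          HasSum (fun m : Fin n → ℕ => c m * ∏ j, z j ^ m j) (f z)) →
        (⨆ z ∈ t • closure G2,
            ‖A (fun w => ∑' l : ℕ,
                c (fun j => (l + 1) * k j) * ∏ j, w j ^ ((l + 1) * k j)) z‖) ≤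
          C * ⨆ z ∈ s • closure {z : Fin n → ℂ | ∀ j, ‖z j‖ < ρ k j}, ‖f z‖ := by
  classical
  intro t ht
  obtain ⟨r, ⟨hr0, hr1⟩, C0, hC0, hA⟩ := hA2 t ht
  have hs0 : 0 < (1 + r) / 2 := by linarith
  have hs1 : (1 + r) / 2 < 1 := by linarith
  have hrs : r < (1 + r) / 2 := by linarith
  set s : ℝ := (1 + r) / 2 with hs
  have hq0 : 0 < r / s := by positivity
  have hq1 : r / s < 1 := (div_lt_one hs0).2 hrs
  set q : ℝ := r / s with hq
  have hrq : r = s * q := by rw [hq]; field_simp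
  refine ⟨C0 * (1 - q)⁻¹, mul_pos hC0 (inv_pos.2 (by linarith)), s, ⟨hs0, hs1⟩, ?_⟩
  intro k hk0 hk f hf c hc
  obtain ⟨hρ0, hPG, hle⟩ := hρ k hk0 hk
  obtain ⟨j0, hj0⟩ : ∃ j, k j ≠ 0 := by
    by_contra! h
    exact hk0 (funext h)
  have hB := cauchy_bound s hs0 hs1 (ρ k) hρ0 f c (fun z hz => hc z (hPG hz))
  set B : ℝ := ⨆ z ∈ s • closure {z : Fin n → ℂ | ∀ j, ‖z j‖ < ρ k j}, ‖f z‖ with hBdef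
  have hB0 : 0 ≤ B := Real.iSup_nonneg fun z => Real.iSup_nonneg fun _ => norm_nonneg _
  set g : (Fin n → ℂ) → ℂ := fun w => ∑' l : ℕ,
                c (fun j => (l + 1) * k j) * ∏ j, w j ^ ((l + 1) * k j) with hg
  have hpow : ∀ (w : Fin n → ℂ) (l : ℕ), ∏ j, w j ^ ((l + 1) * k j) = (∏ j, w j ^ k j) ^ (l + 1) := by
    intro w l
    rw [← Finset.prod_pow]
    exact Finset.prod_congr rfl fun j _ => by rw [← pow_mul, mul_comm]
  have hinj : Function.Injective (fun (l : ℕ) (j : Fin n) => (l + 1) * k j) := by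
    intro l l' h
    have := congrFun h j0
    simpa [hj0] using this
  have hgd : DifferentiableOn ℂ g G1 := by
    intro w hw
    obtain ⟨w', hw', hlt⟩ := exists_bigger G1 hop1 hcirc1 k hk0 w hw
    have hsum := ((hc w' hw').1).comp_injective hinj
    have hφ : DifferentiableOn ℂ (fun ζ : ℂ => ∑' l : ℕ, c (fun j => (l + 1) * k j) * ζ ^ (l + 1))
        (Metric.ball 0 ‖∏ j, w' j ^ k j‖) := by
      refine Complex.differentiableOn_tsum_of_summable_norm hsum (fun l => by fun_prop) Metric.isOpen_ball ?_
      intro l ζ hζ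
      simp only [Function.comp_apply, hpow, norm_mul, norm_pow]
      gcongr
      simpa using (mem_ball_zero_iff.1 hζ).le
    have h1 : DifferentiableAt ℂ (fun ζ : ℂ => ∑' l : ℕ, c (fun j => (l + 1) * k j) * ζ ^ (l + 1))
        (∏ j, w j ^ k j) :=
      hφ.differentiableAt (Metric.isOpen_ball.mem_nhds (mem_ball_zero_iff.2 hlt))
    have h2 : DifferentiableAt ℂ (fun w : Fin n → ℂ => ∏ j, w j ^ k j) w := by fun_prop
    have h3 := DifferentiableAt.comp w h1 h2
    have h4 : g = (fun ζ : ℂ => ∑' l : ℕ, c (fun j => (l + 1) * k j) * ζ ^ (l + 1)) ∘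
        (fun w : Fin n → ℂ => ∏ j, w j ^ k j) := by
      funext w
      simp only [hg, Function.comp_apply, hpow]
    rw [h4]
    exact h3.differentiableWithinAt
  refine (hA g hgd).trans ?_
  rw [mul_assoc]
  refine mul_le_mul_of_nonneg_left ?_ hC0.le
  have hC1 : 0 ≤ (1 - q)⁻¹ * B := mul_nonneg (inv_nonneg.2 (by linarith)) hB0
  refine Real.iSup_le (fun z => Real.iSup_le (fun hz => ?_) hC1) hC1
  obtain ⟨w, hw, rfl⟩ := hz
  have hwR : ‖∏ j, w j ^ k j‖ ≤ ∏ j, ρ k j ^ k j := by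
    have hcl : IsClosed {w : Fin n → ℂ | ‖∏ j, w j ^ k j‖ ≤ ∏ j, ρ k j ^ k j} :=
      isClosed_le (by fun_prop) continuous_const
    exact closure_minimal hle hcl hw
  have hgeo : HasSum (fun l : ℕ => q ^ l * B) ((1 - q)⁻¹ * B) :=
    (hasSum_geometric_of_lt_one hq0.le hq1).mul_right B
  refine tsum_of_norm_bounded hgeo fun l => ?_
  have hBl := hB (fun j => (l + 1) * k j)
  have hK : 1 ≤ ∑ j, k j :=
    (Nat.one_le_iff_ne_zero.2 hj0).trans (Finset.single_le_sum (f := k) (fun _ _ => Nat.zero_le _) (Finset.mem_univ j0))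
  have hprod : ∏ j, (s * ρ k j) ^ ((l + 1) * k j) =
      (s ^ (∑ j, k j) * ∏ j, ρ k j ^ k j) ^ (l + 1) := by
    rw [← Finset.prod_pow_eq_pow_sum, ← Finset.prod_mul_distrib, ← Finset.prod_pow]
    exact Finset.prod_congr rfl fun j _ => by rw [← mul_pow, ← pow_mul, mul_comm (k j)]
  have hz : ‖∏ j, (r • w) j ^ k j‖ = r ^ (∑ j, k j) * ‖∏ j, w j ^ k j‖ := by
    simp only [Pi.smul_apply, norm_prod, norm_pow, norm_smul, Real.norm_eq_abs, abs_of_pos hr0]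
    rw [← Finset.prod_pow_eq_pow_sum, ← Finset.prod_mul_distrib]
    exact Finset.prod_congr rfl fun j _ => by rw [mul_pow]
  rw [hprod] at hBl
  change ‖c (fun j => (l + 1) * k j) * ∏ j, (r • w) j ^ ((l + 1) * k j)‖ ≤ _
  rw [hpow, norm_mul, norm_pow, hz]
  calc ‖c (fun j => (l + 1) * k j)‖ * (r ^ (∑ j, k j) * ‖∏ j, w j ^ k j‖) ^ (l + 1)
      ≤ ‖c (fun j => (l + 1) * k j)‖ * (r ^ (∑ j, k j) * ∏ j, ρ k j ^ k j) ^ (l + 1) := by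
        gcongr
    _ = q ^ ((∑ j, k j) * (l + 1)) *
        (‖c (fun j => (l + 1) * k j)‖ * (s ^ (∑ j, k j) * ∏ j, ρ k j ^ k j) ^ (l + 1)) := by
        rw [hrq]; simp only [mul_pow, pow_mul]; ring
    _ ≤ q ^ l * B := by
        refine mul_le_mul ?_ hBl ?_ (pow_nonneg hq0.le _)
        · exact pow_le_pow_of_le_one hq0.le hq1.le (by nlinarith)
        · have : 0 ≤ ∏ j, ρ k j ^ k j := Finset.prod_nonneg fun j _ => pow_nonneg (hρ0 j).le _
          positivity
end
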